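/- Let π : (X,T) → (Y,S) be a factor map between general topological dynamical systems with h_top(S,Y) < ∞. Then the supremum over all non-empty compact subsets E ⊆ X of h(T,E) − h(S,π(E)) equals h_top(T,X|π). -/

import Mathlib

open Filter Set Metric MeasureTheory
open scoped ENNReal Topology

noncomputable section

variable {X Y : Type*}

def IsSep [PseudoMetricSpace X] (T : X → X) (n : ℕ) (ε : ℝ) (E : Set X) : Prop :=
  E.Pairwise fun x y => ∃ i < n, ε < dist (T^[i] x) (T^[i] y)

def sepMaxCard [PseudoMetricSpace X] (T : X → X) (n : ℕ) (ε : ℝ) (K : Set X) : ℝ≥0∞ :=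
  ⨆ (E : Finset X) (_ : ↑E ⊆ K ∧ IsSep T n ε (↑E : Set X)), (E.card : ℝ≥0∞)

def sepEnt [PseudoMetricSpace X] (T : X → X) (ε : ℝ) (K : Set X) : EReal :=
  Filter.atTop.limsup fun n : ℕ => ENNReal.log (sepMaxCard T n ε K) / (n : EReal)

def subEnt [PseudoMetricSpace X] (T : X → X) (K : Set X) : EReal :=
  ⨆ (ε : ℝ) (_ : 0 < ε), sepEnt T ε K

/-- `(X,T)` is lowerable. -/
def Lowerable [PseudoMetricSpace X] (T : X → X) : Prop :=
  ∀ h : EReal, 0 ≤ h → h ≤ subEnt T (univ : Set X) →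
    ∃ K : Set X, K.Nonempty ∧ IsCompact K ∧ subEnt T K = h

/-- `(X,T)` is hereditarily lowerable. -/
def HerLowerable [PseudoMetricSpace X] (T : X → X) : Prop :=
  ∀ K : Set X, K.Nonempty → IsCompact K → ∀ h : EReal, 0 ≤ h → h ≤ subEnt T K →
    ∃ K' : Set X, K' ⊆ K ∧ K'.Nonempty ∧ IsCompact K' ∧ subEnt T K' = h

/-- `(X,T)` is hereditarily uniformly lowerable: the lowering subset can moreover be chosen
with at most one limit (accumulation) point. -/
def HUL [PseudoMetricSpace X] (T : X → X) : Prop :=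
  ∀ K : Set X, K.Nonempty → IsCompact K → ∀ h : EReal, 0 ≤ h → h ≤ subEnt T K →
    ∃ K' : Set X, K' ⊆ K ∧ K'.Nonempty ∧ IsCompact K' ∧ subEnt T K' = h ∧
      {x | AccPt x (𝓟 K')}.Subsingleton

/-- `Φ_ε(x) = {y : d(T^n x, T^n y) ≤ ε for all n ≥ 0}`. -/
def Phi [PseudoMetricSpace X] (T : X → X) (ε : ℝ) (x : X) : Set X :=
  {y | ∀ n : ℕ, dist (T^[n] x) (T^[n] y) ≤ ε}

/-- `h*_T(ε) = sup_x h(T, Φ_ε(x))`. -/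
def hStar [PseudoMetricSpace X] (T : X → X) (ε : ℝ) : EReal :=
  ⨆ x : X, subEnt T (Phi T ε x)

/-- `(X,T)` is asymptotically `h`-expansive: `h*_T(ε) → 0` as `ε → 0+`. -/
def AsympHExpansive [PseudoMetricSpace X] (T : X → X) : Prop :=
  Tendsto (fun ε : ℝ => hStar T ε) (𝓝[>] 0) (𝓝 (0 : EReal))

/-- `T^n` for `n : ℤ`, for a homeomorphism `T`. -/
def iterZ [TopologicalSpace X] (T : X ≃ₜ X) : ℤ → X → X
  | Int.ofNat n => (⇑T)^[n]
  | Int.negSucc n => (⇑T.symm)^[n + 1]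

/-- `T` is expansive with expansive constant `δ`. -/
def ExpansiveWith [MetricSpace X] (T : X ≃ₜ X) (δ : ℝ) : Prop :=
  ∀ x y : X, x ≠ y → ∃ n : ℤ, δ < dist (iterZ T n x) (iterZ T n y)

/-- `K ⪰ 𝒲` : `K` is contained in some member of the family `𝒲`. -/
def Refines (K : Set X) (W : Finset (Set X)) : Prop := ∃ A ∈ W, K ⊆ A

/-- The join `U ∨ V` of two finite covers. -/
def covJoin (U V : Finset (Set X)) : Finset (Set X) :=
  letI := Classical.decEq (Set X)
  (U ×ˢ V).image fun p => p.1 ∩ p.2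

/-- `dynCov T U n = U_0^{n-1} = ⋁_{i=0}^{n-1} T^{-i} U` (with `U_0^{-1} = {univ}`). -/
def dynCov (T : X → X) (U : Finset (Set X)) : ℕ → Finset (Set X)
  | 0 => {(univ : Set X)}
  | n + 1 =>
      letI := Classical.decEq (Set X)
      covJoin (dynCov T U n) (U.image fun A => T^[n] ⁻¹' A)

/-- `n_{T,U}(K)`: `0` if `K ⋠ U`; `+∞` if `T^i K ⪰ U` for all `i`; otherwise the largest `j`
with `T^i K ⪰ U` for all `0 ≤ i ≤ j-1`. -/
def nTU (T : X → X) (U : Finset (Set X)) (K : Set X) : ℕ∞ :=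
  ⨆ (j : ℕ) (_ : ∀ i < j, Refines (T^[i] '' K) U), (j : ℕ∞)

/-- `e^{-λ n}` for `n : ℕ∞`, valued in `ℝ≥0∞` (with the conventions `e^{-λ·∞} = 0` for `λ > 0`,
`= 1` for `λ = 0` and `= ∞` for `λ < 0`). -/
def expWeight (lam : ℝ) (n : ℕ∞) : ℝ≥0∞ :=
  if n = ⊤ then (if 0 < lam then 0 else if lam = 0 then 1 else ⊤)
  else ENNReal.ofReal (Real.exp (-(lam * (n.toNat : ℝ))))

/-- `m_{T,U}(K,λ,k)`: the infimum of `∑_{E ∈ 𝓔} e^{-λ n_{T,U}(E)}` over all countable families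
`𝓔` of subsets of `X` with `∪𝓔 ⊇ K` and `E ⪰ U_0^{k-1}` for every `E ∈ 𝓔`. -/
def mTU (T : X → X) (U : Finset (Set X)) (K : Set X) (lam : ℝ) (k : ℕ) : ℝ≥0∞ :=
  ⨅ (ℰ : Set (Set X)) (_ : ℰ.Countable ∧ K ⊆ ⋃₀ ℰ ∧ ∀ E ∈ ℰ, Refines E (dynCov T U k)),
    ∑' E : ℰ, expWeight lam (nTU T U (E : Set X))

/-- `m_{T,U}(K,λ) = lim_{k→∞} m_{T,U}(K,λ,k)`; since `m_{T,U}(K,λ,k)` is nondecreasing in `k`,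
the limit is the supremum. -/
def mTUlim (T : X → X) (U : Finset (Set X)) (K : Set X) (lam : ℝ) : ℝ≥0∞ :=
  ⨆ k : ℕ, mTU T U K lam k

/-- `h^B_U(T,K) = inf {λ : m_{T,U}(K,λ) = 0}`. -/
def hBU (T : X → X) (U : Finset (Set X)) (K : Set X) : EReal :=
  ⨅ (lam : ℝ) (_ : mTUlim T U K lam = 0), (lam : EReal)

/-- The dimensional entropy `h^B(T,K) = sup_U h^B_U(T,K)`, supremum over finite open covers. -/
def hB [TopologicalSpace X] (T : X → X) (K : Set X) : EReal :=
  ⨆ (U : Finset (Set X)) (_ : (∀ A ∈ U, IsOpen A) ∧ ⋃₀ (↑U : Set (Set X)) = univ),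
    hBU T U K

/-- `N(U,K)`: the minimal cardinality of a subfamily of `U` covering `K` (`0` for `K = ∅`,
`∞` if no subfamily covers `K`). -/
def covCard (U : Finset (Set X)) (K : Set X) : ℝ≥0∞ :=
  ⨅ (V : Finset (Set X)) (_ : V ⊆ U ∧ K ⊆ ⋃₀ (↑V : Set (Set X))), (V.card : ℝ≥0∞)

/-- `h_U(T,K) = limsup_{n→∞} (1/n) log N(U_0^{n-1},K)`. -/
def hCov (T : X → X) (U : Finset (Set X)) (K : Set X) : EReal :=
  Filter.atTop.limsup fun n : ℕ => ENNReal.log (covCard (dynCov T U n) K) / (n : EReal)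

/-- Topological entropy of a subset via open covers: `h(T,K) = sup_U h_U(T,K)`. -/
def hCovSup [TopologicalSpace X] (T : X → X) (K : Set X) : EReal :=
  ⨆ (U : Finset (Set X)) (_ : (∀ A ∈ U, IsOpen A) ∧ ⋃₀ (↑U : Set (Set X)) = univ),
    hCov T U K

/-- The atom of the (finite) partition `P` containing `x`. -/
def atomAt (P : Finset (Set X)) (x : X) : Set X := ⋃₀ {A | A ∈ P ∧ x ∈ A}

/-- `P` is a finite Borel partition. -/
def IsFinPartition [MeasurableSpace X] (P : Finset (Set X)) : Prop :=
  (∀ A ∈ P, MeasurableSet A) ∧ ⋃₀ (↑P : Set (Set X)) = univ ∧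
    (↑P : Set (Set X)).Pairwise fun A B => Disjoint A B

/-- The Shannon entropy `H_μ(P) = ∑_{A ∈ P} -μ(A) log μ(A)` of a finite partition. -/
def partEnt [MeasurableSpace X] (μ : Measure X) (P : Finset (Set X)) : ℝ :=
  ∑ A ∈ P, -((μ A).toReal * Real.log (μ A).toReal)

/-- The measure-theoretic (Kolmogorov–Sinai) entropy `h_μ(T)`: the supremum over finite Borel
partitions `P` of `lim_n (1/n) H_μ(P_0^{n-1})`; by subadditivity this limit is the infimum. -/
def ksEntropy [MeasurableSpace X] (T : X → X) (μ : Measure X) : EReal :=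
  ⨆ (P : Finset (Set X)) (_ : IsFinPartition P),
    ⨅ n : ℕ, ((partEnt μ (dynCov T P (n + 1)) / (n + 1) : ℝ) : EReal)

/-- `π` is a principal factor map from `(X,T)` to `(Y,S)` : `h_μ(T) = h_{πμ}(S)` for every
`T`-invariant Borel probability measure `μ`. -/
def IsPrincipal [MeasurableSpace X] [MeasurableSpace Y] (T : X → X) (S : Y → Y)
    (π : X → Y) : Prop :=
  ∀ μ : Measure X, IsProbabilityMeasure μ → Measure.map T μ = μ →
    ksEntropy T μ = ksEntropy S (Measure.map π μ)

/-- The relative topological entropy `h_top(T,X|π) = sup_{y ∈ Y} h(T, π^{-1}(y))`. -/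
def relEnt [PseudoMetricSpace X] (T : X → X) (π : X → Y) : EReal :=
  ⨆ y : Y, subEnt T (π ⁻¹' {y})

/-- The canonical conversion `EReal → ℝ≥0∞` (`⊥` and negative reals go to `0`). -/
def erealToENNReal (x : EReal) : ℝ≥0∞ := if x = ⊤ then ⊤ else ENNReal.ofReal x.toReal

/-! Bowen's inequality `h(T,E) ≤ h_top(T,X|π) + h(S,π(E))` gives one direction, and testing with a
fibre, whose image is a single point of entropy `0`, gives the other.

For Bowen's inequality let `b > exp h_top(T,X|π)`. Each fibre is covered, for some `m ≥ 1`, by at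
most `b ^ m` Bowen balls of length `m`, hence so is the preimage of a neighbourhood; by compactness
of `Y`, the preimage of each `δ`-ball is covered in this way with `m` below a uniform bound `M`.
Following an orbit of `S` and concatenating such blocks, the preimage of a Bowen ball of length `n`
and radius `δ` in `Y` contains at most `b ^ (n + M)` separated points, the `M` accounting for the
overshoot of the last block. Hence `s_n(T,E) ≤ b ^ (n + M) · s_n(S,π(E))`. -/

section SeparatedAndSpanning

variable [PseudoMetricSpace X] {T : X → X} {n : ℕ} {ε : ℝ} {K L : Set X}

/-- The closed Bowen ball: the closed ball of radius `ε` for the metric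
`d_n(x, z) = max_{i < n} d(T^i x, T^i z)`. For `n = 0` it is the whole space. -/
def dynClosedBall (T : X → X) (n : ℕ) (ε : ℝ) (z : X) : Set X :=
  {x | ∀ i < n, dist (T^[i] x) (T^[i] z) ≤ ε}

/-- The spanning number `r_n(ε, K)`: the least number of closed Bowen balls of length `n` and
radius `ε` that cover `K`, with centres anywhere in the space (`∞` if finitely many never do). -/
def spanMinCard (T : X → X) (n : ℕ) (ε : ℝ) (K : Set X) : ℝ≥0∞ :=
  ⨅ (Z : Finset X) (_ : K ⊆ ⋃ z ∈ Z, dynClosedBall T n ε z), (Z.card : ℝ≥0∞)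

lemma IsSep.card_le_sepMaxCard {E : Finset X} (hE : IsSep T n ε (E : Set X)) (hEK : ↑E ⊆ K) :
    (E.card : ℝ≥0∞) ≤ sepMaxCard T n ε K :=
  le_iSup₂_of_le (f := fun (E : Finset X) (_ : ↑E ⊆ K ∧ IsSep T n ε (E : Set X)) =>
    (E.card : ℝ≥0∞)) E ⟨hEK, hE⟩ le_rfl

lemma sepMaxCard_mono (hKL : K ⊆ L) : sepMaxCard T n ε K ≤ sepMaxCard T n ε L :=
  iSup₂_le fun _ hE => hE.2.card_le_sepMaxCard (hE.1.trans hKL)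

lemma sepMaxCard_zero_le_one : sepMaxCard T 0 ε K ≤ 1 := by
  refine iSup₂_le fun E hE => ?_
  have hcard : E.card ≤ 1 := Finset.card_le_one.2 fun x hx y hy => by
    by_contra hxy
    obtain ⟨i, hi, -⟩ := hE.2 hx hy hxy
    exact Nat.not_lt_zero i hi
  exact_mod_cast hcard

lemma sepMaxCard_singleton (x : X) : sepMaxCard T n ε {x} = 1 := by
  apply le_antisymm
  · refine iSup₂_le fun E hE => ?_
    exact_mod_cast Finset.card_le_card (Finset.coe_subset_singleton.1 hE.1)
  · simpa using IsSep.card_le_sepMaxCard (T := T) (n := n) (ε := ε) (E := {x})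
      (by simp [IsSep]) (by simp)

lemma sepMaxCard_biUnion_le {ι : Type*} (s : Finset ι) (B : ι → Set X) :
    sepMaxCard T n ε (⋃ i ∈ s, B i) ≤ ∑ i ∈ s, sepMaxCard T n ε (B i) := by
  classical
  refine iSup₂_le fun E ⟨hEB, hE⟩ => ?_
  have hcover : E ⊆ s.biUnion fun i => E.filter (· ∈ B i) := fun x hx => by
    obtain ⟨i, hi, hxi⟩ := mem_iUnion₂.1 (hEB hx)
    exact Finset.mem_biUnion.2 ⟨i, hi, Finset.mem_filter.2 ⟨hx, hxi⟩⟩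
  calc (E.card : ℝ≥0∞) ≤ ∑ i ∈ s, ((E.filter (· ∈ B i)).card : ℝ≥0∞) := by
        exact_mod_cast (Finset.card_le_card hcover).trans Finset.card_biUnion_le
    _ ≤ ∑ i ∈ s, sepMaxCard T n ε (B i) := Finset.sum_le_sum fun i _ =>
        IsSep.card_le_sepMaxCard (hE.mono fun x hx => (Finset.mem_filter.1 hx).1)
          fun x hx => (Finset.mem_filter.1 hx).2

lemma exists_maximalFor_card_isSep (h : sepMaxCard T n ε K ≠ ⊤) :
    ∃ Z : Finset X,
      MaximalFor (fun E : Finset X => ↑E ⊆ K ∧ IsSep T n ε (E : Set X)) Finset.card Z := by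
  obtain ⟨N, hN⟩ := ENNReal.exists_nat_gt h
  refine Set.Finite.exists_maximalFor' Finset.card
    {E : Finset X | ↑E ⊆ K ∧ IsSep T n ε (E : Set X)}
    ((finite_Iio N).subset ?_) ⟨∅, by simp, by simp [IsSep]⟩
  rintro _ ⟨E, ⟨hEK, hE⟩, rfl⟩
  exact_mod_cast (hE.card_le_sepMaxCard hEK).trans_lt hN

lemma subset_iUnion_dynClosedBall_of_maximalFor_card (hε : 0 ≤ ε) {Z : Finset X}
    (hZ : MaximalFor (fun E : Finset X => ↑E ⊆ K ∧ IsSep T n ε (E : Set X)) Finset.card Z) :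
    K ⊆ ⋃ z ∈ Z, dynClosedBall T n ε z := by
  classical
  intro x hx
  by_contra hfar
  have hfar' : ∀ z ∈ Z, ∃ i < n, ε < dist (T^[i] x) (T^[i] z) := by
    simpa [dynClosedBall] using hfar
  have hxZ : x ∉ Z := fun hxZ => by
    obtain ⟨i, -, hi⟩ := hfar' x hxZ
    rw [dist_self] at hi
    exact hi.not_ge hε
  have hsep : IsSep T n ε (insert x Z : Finset X) := by
    rw [Finset.coe_insert]
    refine Set.Pairwise.insert hZ.prop.2 fun z hz _ => ⟨hfar' z hz, ?_⟩
    simpa only [dist_comm] using hfar' z hz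
  have hsub : ↑(insert x Z) ⊆ K := by
    rw [Finset.coe_insert]
    exact insert_subset hx hZ.prop.1
  have hcard := hZ.le_of_le ⟨hsub, hsep⟩ (Finset.card_le_card (Finset.subset_insert x Z))
  rw [Finset.card_insert_of_notMem hxZ] at hcard
  exact Nat.not_succ_le_self _ hcard

lemma spanMinCard_le_sepMaxCard (hε : 0 ≤ ε) : spanMinCard T n ε K ≤ sepMaxCard T n ε K := by
  by_cases h : sepMaxCard T n ε K = ⊤
  · exact h ▸ le_top
  · obtain ⟨Z, hZ⟩ := exists_maximalFor_card_isSep h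
    exact (iInf₂_le Z (subset_iUnion_dynClosedBall_of_maximalFor_card hε hZ)).trans
      (hZ.prop.2.card_le_sepMaxCard hZ.prop.1)

lemma spanMinCard_mono (hKL : K ⊆ L) : spanMinCard T n ε K ≤ spanMinCard T n ε L :=
  le_iInf₂ fun Z hZ => iInf₂_le Z (hKL.trans hZ)

lemma sepMaxCard_le_spanMinCard_image_mul [PseudoMetricSpace Y] {S : Y → Y} {m : ℕ} {δ : ℝ}
    (f : X → Y) {c : ℝ≥0∞} (hc₀ : c ≠ 0) (hc : c ≠ ⊤)
    (h : ∀ y, sepMaxCard T n ε (K ∩ f ⁻¹' dynClosedBall S m δ y) ≤ c) :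
    sepMaxCard T n ε K ≤ spanMinCard S m δ (f '' K) * c := by
  rw [← ENNReal.div_le_iff hc₀ hc]
  refine le_iInf₂ fun Z hZ => ?_
  rw [ENNReal.div_le_iff hc₀ hc]
  have hcover : K ⊆ ⋃ z ∈ Z, K ∩ f ⁻¹' dynClosedBall S m δ z := by
    rw [← inter_iUnion₂, ← preimage_iUnion₂]
    exact subset_inter subset_rfl (image_subset_iff.1 hZ)
  calc sepMaxCard T n ε K ≤ ∑ z ∈ Z, sepMaxCard T n ε (K ∩ f ⁻¹' dynClosedBall S m δ z) :=
        (sepMaxCard_mono hcover).trans (sepMaxCard_biUnion_le Z _)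
    _ ≤ ∑ _z ∈ Z, c := Finset.sum_le_sum fun z _ => h z
    _ = Z.card * c := by rw [Finset.sum_const, nsmul_eq_mul]

/-- Two points of a Bowen ball of length `m` can only be separated at a time `i ≥ m`. -/
lemma sepMaxCard_le_sepMaxCard_iterate_image {m : ℕ} {z : X} (hε : 0 ≤ ε)
    (hK : K ⊆ dynClosedBall T m ε z) :
    sepMaxCard T n (2 * ε) K ≤ sepMaxCard T (n - m) (2 * ε) (T^[m] '' K) := by
  classical
  refine iSup₂_le fun E ⟨hEK, hE⟩ => ?_
  have hsep : ∀ x ∈ E, ∀ y ∈ E, x ≠ y →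
      ∃ i < n - m, 2 * ε < dist (T^[i] (T^[m] x)) (T^[i] (T^[m] y)) := by
    intro x hx y hy hxy
    obtain ⟨i, hin, hi⟩ := hE hx hy hxy
    have hmi : m ≤ i := by
      by_contra! him
      have hx' := hK (hEK hx) i him
      have hy' := hK (hEK hy) i him
      linarith [dist_triangle_right (T^[i] x) (T^[i] y) (T^[i] z)]
    refine ⟨i - m, by lia, ?_⟩
    rwa [← Function.iterate_add_apply, ← Function.iterate_add_apply, Nat.sub_add_cancel hmi]
  have hinj : InjOn T^[m] (E : Set X) := fun x hx y hy hxy => by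
    by_contra hne
    obtain ⟨i, -, hi⟩ := hsep x hx y hy hne
    rw [hxy, dist_self] at hi
    linarith
  rw [← Finset.card_image_of_injOn hinj]
  refine IsSep.card_le_sepMaxCard ?_ (by rw [Finset.coe_image]; exact image_mono hEK)
  rw [Finset.coe_image, IsSep, hinj.pairwise_image]
  exact hsep

lemma dynClosedBall_mem_nhds (hT : Continuous T) {ε' : ℝ} (hε : ε' < ε) {x z : X}
    (hx : x ∈ dynClosedBall T n ε' z) : dynClosedBall T n ε z ∈ 𝓝 x := by
  have hcont (i : ℕ) : Continuous fun x => dist (T^[i] x) (T^[i] z) :=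
    (hT.iterate i).dist continuous_const
  exact (Filter.eventually_all_finite (finite_Iio n)).2 fun i hi =>
    ((hcont i).tendsto x).eventually_le_const ((hx i hi).trans_lt hε)

lemma exists_mem_nhds_spanMinCard_preimage_lt [TopologicalSpace Y] (hT : Continuous T)
    {π : X → Y} (hπ : IsClosedMap π) {ε' : ℝ} (hε : ε' < ε) {c : ℝ≥0∞} {y : Y}
    (h : spanMinCard T n ε' (π ⁻¹' {y}) < c) :
    ∃ V ∈ 𝓝 y, spanMinCard T n ε (π ⁻¹' V) < c := by
  obtain ⟨Z, hZ, hZc⟩ : ∃ Z : Finset X, (π ⁻¹' {y} ⊆ ⋃ z ∈ Z, dynClosedBall T n ε' z) ∧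
      (Z.card : ℝ≥0∞) < c := by
    simpa only [spanMinCard, iInf_lt_iff, exists_prop] using h
  have hnear : ∀ᶠ y' in 𝓝 y, ∀ x ∈ π ⁻¹' {y'}, x ∈ ⋃ z ∈ Z, dynClosedBall T n ε z := by
    refine hπ.eventually_nhds_fiber y fun x hx => ?_
    obtain ⟨z, hz, hxz⟩ := mem_iUnion₂.1 (hZ hx)
    filter_upwards [dynClosedBall_mem_nhds hT hε hxz] with x' hx'
    exact mem_iUnion₂.2 ⟨z, hz, hx'⟩
  exact ⟨_, hnear, (iInf₂_le Z fun x hx => hx x rfl).trans_lt hZc⟩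

end SeparatedAndSpanning

section Entropy

variable [PseudoMetricSpace X] {T : X → X} {ε : ℝ} {K L : Set X}

lemma sepEnt_le_subEnt (hε : 0 < ε) : sepEnt T ε K ≤ subEnt T K :=
  le_iSup₂_of_le (f := fun (ε : ℝ) (_ : 0 < ε) => sepEnt T ε K) ε hε le_rfl

lemma subEnt_mono (hKL : K ⊆ L) : subEnt T K ≤ subEnt T L :=
  iSup₂_mono fun _ _ => ExpGrowth.expGrowthSup_monotone fun _ => sepMaxCard_mono hKL

lemma subEnt_singleton (x : X) : subEnt T {x} = 0 := by
  have hsep : ∀ ε : ℝ, sepEnt T ε {x} = 0 := fun ε => by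
    simp only [sepEnt, sepMaxCard_singleton]
    exact ExpGrowth.expGrowthSup_const one_ne_zero ENNReal.one_ne_top
  simp only [subEnt, hsep]
  exact biSup_const (s := Ioi (0 : ℝ)) nonempty_Ioi

lemma subEnt_nonneg (hK : K.Nonempty) : 0 ≤ subEnt T K := by
  obtain ⟨x, hx⟩ := hK
  exact (subEnt_singleton x).ge.trans (subEnt_mono (singleton_subset_iff.2 hx))

lemma subEnt_fiber_le_relEnt (π : X → Y) (y : Y) : subEnt T (π ⁻¹' {y}) ≤ relEnt T π :=
  le_iSup (fun y => subEnt T (π ⁻¹' {y})) y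

lemma relEnt_nonneg [Nonempty X] (π : X → Y) : 0 ≤ relEnt T π := by
  obtain ⟨x⟩ := ‹Nonempty X›
  exact (subEnt_nonneg (K := π ⁻¹' {π x}) ⟨x, rfl⟩).trans (subEnt_fiber_le_relEnt π (π x))

lemma eventually_sepMaxCard_lt_pow {b : ℝ≥0∞} (h : sepEnt T ε K < ENNReal.log b) :
    ∀ᶠ n : ℕ in atTop, sepMaxCard T n ε K < b ^ n := by
  filter_upwards [eventually_lt_of_limsup_lt h, eventually_gt_atTop 0] with n hn hn₀
  rwa [EReal.div_lt_iff (by exact_mod_cast hn₀) (EReal.natCast_ne_top n), mul_comm,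
    ← ENNReal.log_pow, ENNReal.log_lt_log_iff] at hn

end Entropy

section BowenInequality

lemma iterate_image_preimage_dynClosedBall_subset [PseudoMetricSpace Y] {T : X → X} {S : Y → Y}
    {π : X → Y} {δ : ℝ} (hcomm : Function.Semiconj π T S) (m n : ℕ) (y : Y) :
    T^[m] '' (π ⁻¹' dynClosedBall S n δ y) ⊆ π ⁻¹' dynClosedBall S (n - m) δ (S^[m] y) := by
  rintro _ ⟨x, hx, rfl⟩ i hi
  rw [(hcomm.iterate_right m).eq x, ← Function.iterate_add_apply, ← Function.iterate_add_apply]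
  exact hx (i + m) (by lia)

variable [PseudoMetricSpace X] [PseudoMetricSpace Y] {T : X → X} {S : Y → Y} {π : X → Y}
  {b : ℝ≥0∞} {ε δ : ℝ} {M : ℕ}

lemma exists_mem_nhds_spanMinCard_preimage_lt_pow (hT : Continuous T) (hπ : IsClosedMap π)
    (hb : relEnt T π < ENNReal.log b) (hε : 0 < ε) (y : Y) :
    ∃ m ≥ 1, ∃ V ∈ 𝓝 y, spanMinCard T m ε (π ⁻¹' V) < b ^ m := by
  have hfiber : sepEnt T (ε / 2) (π ⁻¹' {y}) < ENNReal.log b :=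
    ((sepEnt_le_subEnt (half_pos hε)).trans (subEnt_fiber_le_relEnt π y)).trans_lt hb
  obtain ⟨m, hm, hm₁⟩ :=
    ((eventually_sepMaxCard_lt_pow hfiber).and (eventually_ge_atTop 1)).exists
  exact ⟨m, hm₁, exists_mem_nhds_spanMinCard_preimage_lt hT hπ (half_lt_self hε)
    ((spanMinCard_le_sepMaxCard (half_pos hε).le).trans_lt hm)⟩

lemma exists_uniform_spanMinCard_preimage_closedBall_lt_pow [CompactSpace Y] (hT : Continuous T)
    (hπ : IsClosedMap π) (hb : relEnt T π < ENNReal.log b) (hε : 0 < ε) :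
    ∃ δ > 0, ∃ M : ℕ, ∀ y, ∃ m ≥ 1, m ≤ M ∧
      spanMinCard T m ε (π ⁻¹' closedBall y δ) < b ^ m := by
  choose m hm V hV hspan using exists_mem_nhds_spanMinCard_preimage_lt_pow hT hπ hb hε
  obtain ⟨t, -, ht⟩ := isCompact_univ.elim_nhds_subcover (fun y => interior (V y))
    fun y _ => interior_mem_nhds.2 (hV y)
  obtain ⟨δ, hδ, hball⟩ := lebesgue_number_lemma_of_metric (c := fun y : t => interior (V y))
    isCompact_univ (fun _ => isOpen_interior) (by rwa [iUnion_subtype])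
  refine ⟨δ / 2, half_pos hδ, t.sup m, fun y => ?_⟩
  obtain ⟨⟨y', hy'⟩, hy⟩ := hball y (mem_univ y)
  have hsub : closedBall y (δ / 2) ⊆ V y' :=
    (closedBall_subset_ball (half_lt_self hδ)).trans (hy.trans interior_subset)
  exact ⟨m y', hm y', Finset.le_sup (f := m) hy',
    (spanMinCard_mono (preimage_mono hsub)).trans_lt (hspan y')⟩

lemma sepMaxCard_preimage_dynClosedBall_le_pow (hcomm : Function.Semiconj π T S) (hε : 0 ≤ ε)
    (hb₁ : 1 ≤ b) (hb : b ≠ ⊤)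
    (hspan : ∀ y, ∃ m ≥ 1, m ≤ M ∧ spanMinCard T m ε (π ⁻¹' closedBall y δ) ≤ b ^ m)
    (n : ℕ) (y : Y) :
    sepMaxCard T n (2 * ε) (π ⁻¹' dynClosedBall S n δ y) ≤ b ^ (n + M) := by
  induction n using Nat.strong_induction_on generalizing y with
  | _ n ih =>
  rcases Nat.eq_zero_or_pos n with rfl | hn
  · exact sepMaxCard_zero_le_one.trans (one_le_pow₀ hb₁)
  obtain ⟨m, hm₁, hmM, hm⟩ := hspan y
  set K := π ⁻¹' dynClosedBall S n δ y
  -- The exponent left for the blocks after the first; it vanishes when the first one reaches `n`.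
  obtain ⟨k, hk, hrest⟩ : ∃ k, m + k ≤ n + M ∧
      sepMaxCard T (n - m) (2 * ε) (π ⁻¹' dynClosedBall S (n - m) δ (S^[m] y)) ≤ b ^ k := by
    rcases le_or_gt n m with hnm | hmn
    · refine ⟨0, by lia, ?_⟩
      rw [Nat.sub_eq_zero_of_le hnm, pow_zero]
      exact sepMaxCard_zero_le_one
    · exact ⟨n - m + M, by lia, ih (n - m) (by lia) (S^[m] y)⟩
  have hpiece : ∀ z, sepMaxCard T n (2 * ε) (K ∩ dynClosedBall T m ε z) ≤ b ^ k := fun z =>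
    calc sepMaxCard T n (2 * ε) (K ∩ dynClosedBall T m ε z)
        ≤ sepMaxCard T (n - m) (2 * ε) (T^[m] '' (K ∩ dynClosedBall T m ε z)) :=
          sepMaxCard_le_sepMaxCard_iterate_image hε inter_subset_right
      _ ≤ sepMaxCard T (n - m) (2 * ε) (π ⁻¹' dynClosedBall S (n - m) δ (S^[m] y)) :=
          sepMaxCard_mono ((image_mono inter_subset_left).trans
            (iterate_image_preimage_dynClosedBall_subset hcomm m n y))
      _ ≤ b ^ k := hrest
  have hKball : K ⊆ π ⁻¹' closedBall y δ := fun x hx => hx 0 hn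
  calc sepMaxCard T n (2 * ε) K ≤ spanMinCard T m ε (id '' K) * b ^ k :=
        sepMaxCard_le_spanMinCard_image_mul id (pow_ne_zero k (one_pos.trans_le hb₁).ne')
          (ENNReal.pow_ne_top hb) hpiece
    _ ≤ b ^ m * b ^ k := by
        rw [image_id]
        gcongr
        exact (spanMinCard_mono hKball).trans hm
    _ = b ^ (m + k) := (pow_add b m k).symm
    _ ≤ b ^ (n + M) := pow_le_pow_right₀ hb₁ hk

lemma sepEnt_le_log_add_sepEnt_image (hcomm : Function.Semiconj π T S) (hε : 0 ≤ ε) (hδ : 0 ≤ δ)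
    (hb₁ : 1 ≤ b) (hb : b ≠ ⊤)
    (hspan : ∀ y, ∃ m ≥ 1, m ≤ M ∧ spanMinCard T m ε (π ⁻¹' closedBall y δ) ≤ b ^ m)
    (E : Set X) :
    sepEnt T (2 * ε) E ≤ ENNReal.log b + sepEnt S δ (π '' E) := by
  have hb₀ : b ≠ 0 := (one_pos.trans_le hb₁).ne'
  have hcount (n : ℕ) : sepMaxCard T n (2 * ε) E ≤
      b ^ M * (b ^ n * sepMaxCard S n δ (π '' E)) :=
    calc sepMaxCard T n (2 * ε) E
        ≤ spanMinCard S n δ (π '' E) * b ^ (n + M) :=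
          sepMaxCard_le_spanMinCard_image_mul π (pow_ne_zero _ hb₀) (ENNReal.pow_ne_top hb)
            fun y => (sepMaxCard_mono inter_subset_right).trans
              (sepMaxCard_preimage_dynClosedBall_le_pow hcomm hε hb₁ hb hspan n y)
      _ ≤ sepMaxCard S n δ (π '' E) * b ^ (n + M) := by
          gcongr
          exact spanMinCard_le_sepMaxCard hδ
      _ = b ^ M * (b ^ n * sepMaxCard S n δ (π '' E)) := by ring
  have hlog : ExpGrowth.expGrowthSup (fun n => b ^ n) = ENNReal.log b :=
    ExpGrowth.expGrowthSup_pow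
  have hbot : ENNReal.log b ≠ ⊥ := ENNReal.log_eq_bot_iff.not.2 hb₀
  have htop : ENNReal.log b ≠ ⊤ := ENNReal.log_eq_top_iff.not.2 hb
  calc sepEnt T (2 * ε) E
      ≤ ExpGrowth.expGrowthSup ((fun n => b ^ n) * fun n => sepMaxCard S n δ (π '' E)) :=
        ExpGrowth.expGrowthSup_le_of_eventually_le (ENNReal.pow_ne_top hb)
          (Eventually.of_forall hcount)
    _ ≤ ENNReal.log b + sepEnt S δ (π '' E) := by
        rw [← hlog] at hbot htop ⊢
        exact ExpGrowth.expGrowthSup_mul_le (.inl hbot) (.inl htop)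

lemma subEnt_le_log_add_subEnt_image [CompactSpace Y] (hT : Continuous T) (hπ : IsClosedMap π)
    (hcomm : Function.Semiconj π T S) (hb₁ : 1 ≤ b) (hb : b ≠ ⊤)
    (hrel : relEnt T π < ENNReal.log b) (E : Set X) :
    subEnt T E ≤ ENNReal.log b + subEnt S (π '' E) := by
  refine iSup₂_le fun ε hε => ?_
  obtain ⟨δ, hδ, M, hspan⟩ :=
    exists_uniform_spanMinCard_preimage_closedBall_lt_pow hT hπ hrel (half_pos hε)
  have hspan' : ∀ y, ∃ m ≥ 1, m ≤ M ∧
      spanMinCard T m (ε / 2) (π ⁻¹' closedBall y δ) ≤ b ^ m := fun y =>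
    (hspan y).imp fun _ ⟨hm₁, hmM, hm⟩ => ⟨hm₁, hmM, hm.le⟩
  calc sepEnt T ε E = sepEnt T (2 * (ε / 2)) E := by rw [mul_div_cancel₀ ε two_ne_zero]
    _ ≤ ENNReal.log b + sepEnt S δ (π '' E) :=
        sepEnt_le_log_add_sepEnt_image hcomm (half_pos hε).le hδ.le hb₁ hb hspan' E
    _ ≤ ENNReal.log b + subEnt S (π '' E) := by
        gcongr
        exact sepEnt_le_subEnt hδ

theorem subEnt_le_relEnt_add_subEnt_image [CompactSpace Y] (hT : Continuous T)
    (hπ : IsClosedMap π) (hcomm : Function.Semiconj π T S) {E : Set X} (hE : E.Nonempty) :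
    subEnt T E ≤ relEnt T π + subEnt S (π '' E) := by
  have : Nonempty X := hE.nonempty
  have hrel : 0 ≤ relEnt T π := relEnt_nonneg π
  have himage : 0 ≤ subEnt S (π '' E) := subEnt_nonneg (hE.image π)
  rw [← EReal.sub_le_iff_le_add (.inl (EReal.bot_lt_zero.trans_le himage).ne')
    (.inr (EReal.bot_lt_zero.trans_le hrel).ne'), ← EReal.le_of_forall_lt_iff_le]
  intro a ha
  have hlog : ENNReal.log (EReal.exp a) = a := EReal.log_exp a
  have hexp₁ : 1 ≤ EReal.exp a := by
    rw [← ENNReal.zero_le_log_iff, hlog]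
    exact hrel.trans ha.le
  have hexp : EReal.exp a ≠ ⊤ := by simp
  refine EReal.sub_le_of_le_add ?_
  rw [← hlog] at ha ⊢
  exact subEnt_le_log_add_subEnt_image hT hπ hcomm hexp₁ hexp ha E

end BowenInequality

/-- In `EReal`, `⊤ - ⊤ = ⊥`, whence the restriction to sets whose image has finite entropy. -/
theorem sup_entropy_difference_eq_relEnt_general [PseudoMetricSpace X] [PseudoMetricSpace Y]
    [CompactSpace Y] {T : X → X} (hT : Continuous T) {S : Y → Y} {π : X → Y} (hπ : IsProperMap π)
    (hπs : Function.Surjective π) (hcomm : Function.Semiconj π T S) :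
    (⨆ (E : Set X) (_ : (E.Nonempty ∧ IsCompact E) ∧ subEnt S (π '' E) < ⊤),
      (subEnt T E - subEnt S (π '' E))) = relEnt T π := by
  apply le_antisymm
  · exact iSup₂_le fun E hE => EReal.sub_le_of_le_add
      (subEnt_le_relEnt_add_subEnt_image hT hπ.isClosedMap hcomm hE.1.1)
  · refine iSup_le fun y => ?_
    have hne : (π ⁻¹' {y}).Nonempty := hπs y
    have hcompact : IsCompact (π ⁻¹' {y}) := hπ.isCompact_preimage isCompact_singleton
    have himage : subEnt S (π '' (π ⁻¹' {y})) = 0 := by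
      rw [image_preimage_eq _ hπs, subEnt_singleton]
    refine le_iSup₂_of_le (π ⁻¹' {y}) ⟨⟨hne, hcompact⟩, himage ▸ EReal.zero_lt_top⟩ ?_
    rw [himage, sub_zero]

/-- If `π : (X,T) → (Y,S)` is a factor map between GTDSs with
`h_top(S,Y) < ∞`, then `sup_{E ∈ 2^X} (h(T,E) - h(S,π(E))) = h_top(T,X|π)`. -/
theorem sup_entropy_difference_eq_relEnt {X Y : Type*} [MetricSpace X] [CompactSpace X]
    [MetricSpace Y] [CompactSpace Y]
    (T : X → X) (hT : Continuous T) (S : Y → Y) (hS : Continuous S)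
    (π : X → Y) (hπc : Continuous π) (hπs : Function.Surjective π)
    (hcomm : π ∘ T = S ∘ π) (hfin : subEnt S (univ : Set Y) < ⊤) :
    (⨆ (E : Set X) (_ : E.Nonempty ∧ IsCompact E), (subEnt T E - subEnt S (π '' E)))
      = relEnt T π := by
  simpa only [(subEnt_mono (subset_univ _)).trans_lt hfin, and_true] using
    sup_entropy_difference_eq_relEnt_general hT hπc.isProperMap hπs
      (Function.semiconj_iff_comp_eq.2 hcomm)
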